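/- arXiv:2403.05457 — 4 statements merged into one kernel-verified Lean document; each statement's English description precedes it below -/
import Mathlib

section
/- Let Γ = U C Uᵀ be a positive definite symmetric matrix in ℝ^{n×n} with U orthogonal and C diagonal with positive diagonal entries c_1,…,c_n. Define the matrix M ∈ ℝ^{(n(n+1)/2)×n²} by M_{ι₁(i,j), ι₂(ℓ,k)} = c_j U_{ℓ,i} U_{k,j} + c_i U_{ℓ,j} U_{k,i} if i ≠ j, and M_{ι₁(i,j), ι₂(ℓ,k)} = U_{ℓ,i} U_{k,j} if i = j, and the vector b ∈ ℝ^{n(n+1)/2} by b_{ι₁(i,j)} = 0 if i ≠ j and b_{ι₁(i,i)} = -1/(2c_i), where ι₁ enumerates pairs (i,j) with i ≤ j and ι₂ enumerates all pairs in [n]². Then for every v ∈ ℝ^{n²}, the matrix A = vec⁻¹(v) satisfies ΓAᵀ + AΓ = -I if and only if M v = b. -/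
open Matrix

/-!
Substituting `B = Uᵀ A U` diagonalizes the Lyapunov operator: since `U` is orthogonal, the equation
for `A` becomes `C Bᵀ + B C = -I`, whose entries are `c j * B i j + c i * B j i = -δ i j`. These are
symmetric in `(i, j)`, so those with `i ≤ j` suffice, and `M *ᵥ v` lists their left-hand sides, with
the diagonal equations `2 * c i * B i i = -1` divided by `2 * c i`.
-/

section CommSemiring

variable {n R : Type*} [Fintype n] [CommSemiring R]

theorem transpose_mul_mul_apply_eq_sum_prod {k l m : Type*} [Fintype m] (U : Matrix m k R)
    (A : Matrix m n R) (V : Matrix n l R) (i : k) (j : l) :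
    (Uᵀ * A * V) i j = ∑ p : m × n, U p.1 i * V p.2 j * A p.1 p.2 := by
  simp only [mul_apply, transpose_apply, Finset.sum_mul, Fintype.sum_prod_type_right,
    mul_right_comm]

theorem lyapunov_iff_of_orthogonal_conj [DecidableEq n] {U : Matrix n n R} (hU : U * Uᵀ = 1)
    (A C S : Matrix n n R) :
    U * C * Uᵀ * Aᵀ + A * (U * C * Uᵀ) = S ↔
      C * (Uᵀ * A * U)ᵀ + Uᵀ * A * U * C = Uᵀ * S * U := by
  have hU' : Uᵀ * U = 1 := mul_eq_one_comm.mp hU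
  have isUnit_U : IsUnit U := .of_mul_eq_one _ hU
  have isUnit_Ut : IsUnit Uᵀ := .of_mul_eq_one _ hU'
  have conj_left : Uᵀ * (U * C * Uᵀ * Aᵀ) * U = C * (Uᵀ * A * U)ᵀ := by
    calc Uᵀ * (U * C * Uᵀ * Aᵀ) * U = Uᵀ * U * C * (Uᵀ * Aᵀ * U) := by
          simp only [Matrix.mul_assoc]
      _ = C * (Uᵀ * A * U)ᵀ := by
          simp only [hU', Matrix.one_mul, transpose_mul, transpose_transpose, Matrix.mul_assoc]
  have conj_right : Uᵀ * (A * (U * C * Uᵀ)) * U = Uᵀ * A * U * C := by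
    calc Uᵀ * (A * (U * C * Uᵀ)) * U = Uᵀ * A * U * C * (Uᵀ * U) := by
          simp only [Matrix.mul_assoc]
      _ = Uᵀ * A * U * C := by rw [hU', Matrix.mul_one]
  rw [← conj_left, ← conj_right, ← Matrix.add_mul, ← Matrix.mul_add, isUnit_U.mul_left_inj,
    isUnit_Ut.mul_right_inj]

theorem diagonal_lyapunov_iff_forall_le [LinearOrder n] (c : n → R) (B : Matrix n n R)
    {S : Matrix n n R} (hS : S.IsSymm) :
    diagonal c * Bᵀ + B * diagonal c = S ↔
      ∀ i j, i ≤ j → c j * B i j + c i * B j i = S i j := by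
  have entry (i j : n) :
      (diagonal c * Bᵀ + B * diagonal c) i j = c j * B i j + c i * B j i := by
    rw [Matrix.add_apply, diagonal_mul, mul_diagonal, transpose_apply, add_comm, mul_comm (B i j)]
  simp only [← Matrix.ext_iff, entry]
  refine ⟨fun h i j _ => h i j, fun h i j => ?_⟩
  rcases le_total i j with hij | hji
  · exact h i j hij
  · rw [add_comm, h j i hji, hS.apply]

theorem mulVec_apply_of_lyapunov_row [DecidableEq n] {r s : Type*} [Fintype s]
    {U : Matrix n n R} {c : n → R} {M : Matrix r s R} {ι : n × n ≃ s} {x : r} {i j : n}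
    (hM : ∀ ℓ k, M x (ι (ℓ, k)) =
      if i = j then U ℓ i * U k j else c j * U ℓ i * U k j + c i * U ℓ j * U k i)
    {v : s → R} {A : Matrix n n R} (hA : ∀ ℓ k, A ℓ k = v (ι (ℓ, k))) :
    (M *ᵥ v) x =
      if i = j then (Uᵀ * A * U) i j
      else c j * (Uᵀ * A * U) i j + c i * (Uᵀ * A * U) j i := by
  simp only [mulVec, dotProduct, ← ι.sum_comp, transpose_mul_mul_apply_eq_sum_prod, hM, ← hA]
  split_ifs
  · rfl
  · simp only [add_mul, Finset.sum_add_distrib, Finset.mul_sum, mul_assoc]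

end CommSemiring

theorem lyapunov_iff_linear_system_general {n K r s : Type*} [Fintype n] [LinearOrder n]
    [Field K] [NeZero (2 : K)] [Fintype s] {U Γ : Matrix n n K} {c : n → K}
    (hU : U * Uᵀ = 1) (hc : ∀ i, c i ≠ 0) (hΓ : Γ = U * diagonal c * Uᵀ)
    {ι₁ : {p : n × n // p.1 ≤ p.2} ≃ r} {ι₂ : n × n ≃ s} {M : Matrix r s K} {b : r → K}
    (hM : ∀ (i j : n) (hij : i ≤ j) (ℓ k : n),
      M (ι₁ ⟨(i, j), hij⟩) (ι₂ (ℓ, k)) =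
        if i = j then U ℓ i * U k j else c j * U ℓ i * U k j + c i * U ℓ j * U k i)
    (hb : ∀ (i j : n) (hij : i ≤ j),
      b (ι₁ ⟨(i, j), hij⟩) = if i = j then -1 / (2 * c i) else 0)
    {v : s → K} {A : Matrix n n K} (hA : ∀ ℓ k, A ℓ k = v (ι₂ (ℓ, k))) :
    Γ * Aᵀ + A * Γ = -1 ↔ M *ᵥ v = b := by
  have conj_neg_one : Uᵀ * (-1) * U = -1 := by
    rw [Matrix.mul_neg, Matrix.mul_one, Matrix.neg_mul, mul_eq_one_comm.mp hU]
  rw [hΓ, lyapunov_iff_of_orthogonal_conj hU, conj_neg_one,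
    diagonal_lyapunov_iff_forall_le c _ isSymm_one.neg, funext_iff, ← ι₁.forall_congr_right]
  simp only [Subtype.forall, Prod.forall]
  refine forall₃_congr fun i j hij => ?_
  rw [mulVec_apply_of_lyapunov_row (hM i j hij) hA, hb]
  rcases eq_or_ne i j with rfl | hne
  · rw [if_pos rfl, if_pos rfl, neg_apply, one_apply_eq,
      eq_div_iff (mul_ne_zero two_ne_zero (hc i)), ← two_mul, ← mul_assoc, mul_comm]
  · rw [if_neg hne, if_neg hne, neg_apply, one_apply_ne hne, neg_zero]

/-- Given an orthonormal spectral decomposition `Γ = U C Uᵀ` of a positive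
definite symmetric matrix (U orthogonal, C diagonal with positive diagonal entries),
and the matrix `M` and vector `b` built from `U` and the eigenvalues `cᵢ = C i i` via
the index bijections `ι₁` (upper triangle, `i ≤ j`) and `ι₂` (all pairs, used for the
vectorization), a matrix `A = vec⁻¹(v)` satisfies the Lyapunov equation
`Γ Aᵀ + A Γ = -I` if and only if `M v = b`. -/
theorem lyapunov_iff_linear_system (n : ℕ) (U C Γ : Matrix (Fin n) (Fin n) ℝ)
    (hU : U * Uᵀ = 1)
    (hCdiag : ∀ i j : Fin n, i ≠ j → C i j = 0)
    (hCpos : ∀ i : Fin n, 0 < C i i)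
    (hΓ : Γ = U * C * Uᵀ)
    (ι₁ : {p : Fin n × Fin n // p.1 ≤ p.2} ≃ Fin (n * (n + 1) / 2))
    (ι₂ : Fin n × Fin n ≃ Fin (n * n))
    (M : Matrix (Fin (n * (n + 1) / 2)) (Fin (n * n)) ℝ)
    (b : Fin (n * (n + 1) / 2) → ℝ)
    (hM : ∀ (i j : Fin n) (hij : i ≤ j) (ℓ k : Fin n),
      M (ι₁ ⟨(i, j), hij⟩) (ι₂ (ℓ, k)) =
        if i = j then U ℓ i * U k j
        else C j j * U ℓ i * U k j + C i i * U ℓ j * U k i)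
    (hb : ∀ (i j : Fin n) (hij : i ≤ j),
      b (ι₁ ⟨(i, j), hij⟩) = if i = j then -1 / (2 * C i i) else 0)
    (v : Fin (n * n) → ℝ) (A : Matrix (Fin n) (Fin n) ℝ)
    (hA : ∀ ℓ k : Fin n, A ℓ k = v (ι₂ (ℓ, k))) :
    Γ * Aᵀ + A * Γ = -1 ↔ M.mulVec v = b :=
  lyapunov_iff_linear_system_general (c := C.diag) hU (fun i => (hCpos i).ne')
    (by rwa [IsDiag.diagonal_diag fun i j => hCdiag i j]) hM hb hA
end

section
/- Let Γ ∈ ℝ^{n×n} be positive definite symmetric. The set S_Γ = {A ∈ ℝ^{n×n} : ΓAᵀ + AΓ = -I} is a nonempty affine subspace of ℝ^{n×n} whose direction (the linear subspace {A ∈ ℝ^{n×n} : ΓAᵀ + AΓ = 0}) has dimension n(n-1)/2. -/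
/-!
For symmetric `Γ`, `Γ Aᵀ + A Γ = (A Γ)ᵀ + A Γ`. So when `Γ` is moreover invertible, `A ↦ A Γ`
identifies the solutions of the homogeneous equation with the skew-symmetric matrices, which are
freely determined by their entries above the diagonal. For symmetric `C`, a particular solution of
`Γ Aᵀ + A Γ = C` is `A = ½ C Γ⁻¹`, because then `A Γ = ½ C` is symmetric.
-/

open Matrix

section SkewSymmetric

open LieAlgebra.Orthogonal

variable {ι R : Type*}

theorem diag_eq_zero_of_transpose_eq_neg [Ring R] (h2 : IsLeftRegular (2 : R))
    {A : Matrix ι ι R} (hA : Aᵀ = -A) (i : ι) : A i i = 0 := by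
  have hii : A i i = -A i i := congr_fun₂ hA i i
  exact h2 (by simpa [two_mul] using eq_neg_iff_add_eq_zero.1 hii)

theorem eq_of_transpose_eq_neg_of_forall_lt [LinearOrder ι] [Ring R]
    (h2 : IsLeftRegular (2 : R)) {A B : Matrix ι ι R} (hA : Aᵀ = -A) (hB : Bᵀ = -B)
    (h : ∀ i j, i < j → A i j = B i j) : A = B := by
  ext i j
  obtain hij | rfl | hji := lt_trichotomy i j
  · exact h i j hij
  · rw [diag_eq_zero_of_transpose_eq_neg h2 hA, diag_eq_zero_of_transpose_eq_neg h2 hB]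
  · calc A i j = -A j i := congr_fun₂ hA j i
      _ = -B j i := by rw [h j i hji]
      _ = B i j := (congr_fun₂ hB j i).symm

/-- The skew-symmetric matrix with prescribed entries strictly above the diagonal, which are
indexed by the pairs `(i, j)` with `i < j`; it inverts reading off these entries. -/
def skewOfUpper [LinearOrder ι] [Zero R] [Neg R] (f : {p : ι × ι // p.1 < p.2} → R) :
    Matrix ι ι R :=
  of fun i j ↦ if h : i < j then f ⟨(i, j), h⟩ else if h : j < i then -f ⟨(j, i), h⟩ else 0

theorem skewOfUpper_apply_of_lt [LinearOrder ι] [Zero R] [Neg R]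
    (f : {p : ι × ι // p.1 < p.2} → R) {i j : ι} (h : i < j) :
    skewOfUpper f i j = f ⟨(i, j), h⟩ :=
  dif_pos h

theorem transpose_skewOfUpper [LinearOrder ι] [SubtractionMonoid R]
    (f : {p : ι × ι // p.1 < p.2} → R) : (skewOfUpper f)ᵀ = -skewOfUpper f := by
  ext i j
  obtain h | rfl | h := lt_trichotomy i j <;> simp [skewOfUpper, *, lt_asymm]

theorem skewOfUpper_of_transpose_eq_neg [LinearOrder ι] [Ring R] (h2 : IsLeftRegular (2 : R))
    {A : Matrix ι ι R} (hA : Aᵀ = -A) : skewOfUpper (fun p ↦ A p.1.1 p.1.2) = A :=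
  eq_of_transpose_eq_neg_of_forall_lt h2 (transpose_skewOfUpper _) hA
    fun _ _ h ↦ skewOfUpper_apply_of_lt _ h

variable [Fintype ι] [CommRing R]

/-- The coordinates on the space `so ι R` of skew-symmetric matrices given by the entries strictly
above the diagonal, used to compute its dimension. -/
def soEquivUpper [LinearOrder ι] (h2 : IsLeftRegular (2 : R)) :
    so ι R ≃ₗ[R] ({p : ι × ι // p.1 < p.2} → R) where
  toFun A p := A.1 p.1.1 p.1.2
  map_add' _ _ := rfl
  map_smul' _ _ := rfl
  invFun f := ⟨skewOfUpper f, (mem_so ι R _).2 (transpose_skewOfUpper f)⟩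
  left_inv A := Subtype.ext (skewOfUpper_of_transpose_eq_neg h2 ((mem_so ι R _).1 A.2))
  right_inv f := funext fun p ↦ skewOfUpper_apply_of_lt f p.2

theorem finrank_so [DecidableEq ι] [Nontrivial R] (h2 : IsLeftRegular (2 : R)) :
    Module.finrank R (so ι R) = (Fintype.card ι).choose 2 := by
  let order : LinearOrder ι := LinearOrder.lift' (Fintype.equivFin ι) (Fintype.equivFin ι).injective
  obtain rfl : ‹DecidableEq ι› = order.toDecidableEq := Subsingleton.elim _ _
  rw [(soEquivUpper h2).finrank_eq, Module.finrank_fintype_fun_eq_card, Fintype.card_subtype,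
    Fintype.card_product_filter_lt]

end SkewSymmetric

theorem coe_affineSubspace_mk'_ker {k V W : Type*} [Ring k] [AddCommGroup V] [Module k V]
    [AddCommGroup W] [Module k W] (f : V →ₗ[k] W) (v : V) :
    (AffineSubspace.mk' v f.ker : Set V) = {x | f x = f v} := by
  ext x
  simp [sub_eq_zero]

section Lyapunov

open LieAlgebra.Orthogonal

attribute [local instance] LieRing.ofAssociativeRing

variable {ι R : Type*} [Fintype ι]

/-- The covariance Lyapunov operator `A ↦ Γ Aᵀ + A Γ`, as a linear map: `S_Γ` is its fibre over
`-1`, and the direction of `S_Γ` is its kernel. -/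
def lyapunovMap [CommSemiring R] (Γ : Matrix ι ι R) : Matrix ι ι R →ₗ[R] Matrix ι ι R :=
  LinearMap.mulLeft R Γ ∘ₗ (transposeLinearEquiv ι ι R R).toLinearMap + LinearMap.mulRight R Γ

theorem lyapunovMap_apply [CommSemiring R] (Γ A : Matrix ι ι R) :
    lyapunovMap Γ A = Γ * Aᵀ + A * Γ :=
  rfl

theorem lyapunovMap_apply_of_isSymm [CommSemiring R] {Γ : Matrix ι ι R} (hΓ : Γ.IsSymm)
    (A : Matrix ι ι R) : lyapunovMap Γ A = (A * Γ)ᵀ + A * Γ := by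
  rw [lyapunovMap_apply, transpose_mul, hΓ.eq]

variable [DecidableEq ι] [CommRing R] {Γ : Matrix ι ι R}

theorem mem_ker_lyapunovMap_iff (hΓ : Γ.IsSymm) {A : Matrix ι ι R} :
    A ∈ (lyapunovMap Γ).ker ↔ A * Γ ∈ so ι R := by
  rw [LinearMap.mem_ker, lyapunovMap_apply_of_isSymm hΓ, mem_so, eq_neg_iff_add_eq_zero]

theorem finrank_ker_lyapunovMap [Nontrivial R] (h2 : IsLeftRegular (2 : R)) (hΓ : Γ.IsSymm)
    (hΓu : IsUnit Γ) :
    Module.finrank R (lyapunovMap Γ).ker = (Fintype.card ι).choose 2 := by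
  let mulΓ : Matrix ι ι R ≃ₗ[R] Matrix ι ι R := hΓu.unit.mulRightLinearEquiv R
  have hker : (lyapunovMap Γ).ker = (so ι R).toSubmodule.comap mulΓ.toLinearMap :=
    Submodule.ext fun _ ↦ mem_ker_lyapunovMap_iff hΓ
  rw [hker, (mulΓ.ofSubmodule' _).finrank_eq]
  exact finrank_so h2

theorem lyapunovMap_half_smul_mul_inv [Invertible (2 : R)] (hΓ : Γ.IsSymm) (hΓu : IsUnit Γ)
    {C : Matrix ι ι R} (hC : C.IsSymm) : lyapunovMap Γ ((⅟2 : R) • (C * Γ⁻¹)) = C := by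
  have hmul : (⅟2 : R) • (C * Γ⁻¹) * Γ = (⅟2 : R) • C := by
    rw [smul_mul, nonsing_inv_mul_cancel_right _ _ ((isUnit_iff_isUnit_det Γ).1 hΓu)]
  rw [lyapunovMap_apply_of_isSymm hΓ, hmul, transpose_smul, hC.eq, ← add_smul,
    invOf_two_add_invOf_two, one_smul]

theorem lyapunov_solution_set_affine_general [Nontrivial R] [Invertible (2 : R)] (hΓ : Γ.IsSymm)
    (hΓu : IsUnit Γ) {C : Matrix ι ι R} (hC : C.IsSymm) :
    ∃ S : AffineSubspace R (Matrix ι ι R),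
      (S : Set (Matrix ι ι R)) = {A | Γ * Aᵀ + A * Γ = C} ∧
      (S : Set (Matrix ι ι R)).Nonempty ∧
      (S.direction : Set (Matrix ι ι R)) = {A | Γ * Aᵀ + A * Γ = 0} ∧
      Module.finrank R S.direction = (Fintype.card ι).choose 2 := by
  have h2 : IsLeftRegular (2 : R) := (isUnit_of_invertible 2).isRegular.left
  refine ⟨AffineSubspace.mk' ((⅟2 : R) • (C * Γ⁻¹)) (lyapunovMap Γ).ker, ?_,
    AffineSubspace.mk'_nonempty _ _, ?_, ?_⟩
  · rw [coe_affineSubspace_mk'_ker, lyapunovMap_half_smul_mul_inv hΓ hΓu hC]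
    rfl
  · rw [AffineSubspace.direction_mk']
    rfl
  · rw [AffineSubspace.direction_mk', finrank_ker_lyapunovMap h2 hΓ hΓu]

end Lyapunov

/-- For a positive definite symmetric `Γ`, the solution set
`S_Γ = {A : Γ Aᵀ + A Γ = -I}` is a nonempty affine subspace of `ℝ^{n×n}` whose direction
is the linear subspace `{A : Γ Aᵀ + A Γ = 0}`, of dimension `n(n-1)/2`. -/
theorem lyapunov_solution_set_affine (n : ℕ) (Γ : Matrix (Fin n) (Fin n) ℝ)
    (hΓ : Γ.PosDef) :
    ∃ S : AffineSubspace ℝ (Matrix (Fin n) (Fin n) ℝ),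
      (S : Set (Matrix (Fin n) (Fin n) ℝ)) = {A | Γ * Aᵀ + A * Γ = -1} ∧
      (S : Set (Matrix (Fin n) (Fin n) ℝ)).Nonempty ∧
      (S.direction : Set (Matrix (Fin n) (Fin n) ℝ)) = {A | Γ * Aᵀ + A * Γ = 0} ∧
      Module.finrank ℝ S.direction = n * (n - 1) / 2 := by
  simpa only [Fintype.card_fin, Nat.choose_two_right] using
    lyapunov_solution_set_affine_general (isHermitian_iff_isSymm.1 hΓ.isHermitian) hΓ.isUnit
      isSymm_one.neg
end

section
/- Let A ∈ ℝ^{n×n} be Hurwitz, i.e., every eigenvalue of A (as a complex matrix) has strictly negative real part. Then the Kronecker sum I ⊗ A + A ⊗ I ∈ ℝ^{n²×n²} is invertible. -/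
open Matrix Kronecker

/-!
The matrices `a = 1 ⊗ A` and `b = -(A ⊗ 1)` commute and, by Cayley–Hamilton, are annihilated by
`p = χ_A` and `q = χ_A(-X)`. All complex roots of `p` lie in the open left half-plane and those of
`q` in the open right one, so `p` and `q` are coprime. A Bézout relation `u p + v q = 1` evaluated
at `b` shows that `p(b)` is a unit. As `a - b` divides `p(a) - p(b) = -p(b)`, it is a unit too.
-/

open Polynomial

section CoprimeAnnihilators

variable {R S : Type*} [CommRing R]

lemma isUnit_aeval_of_isCoprime [CommRing S] [Algebra R S] {b : S} {p q : R[X]}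
    (hpq : IsCoprime p q) (hb : aeval b q = 0) : IsUnit (aeval b p) := by
  have hcoprime : IsCoprime (aeval b p) (aeval b q) := hpq.map (aeval b).toRingHom
  rwa [hb, isCoprime_zero_right] at hcoprime

lemma isUnit_sub_of_isCoprime [CommRing S] [Algebra R S] {a b : S} {p q : R[X]}
    (hpq : IsCoprime p q) (ha : aeval a p = 0) (hb : aeval b q = 0) : IsUnit (a - b) := by
  have hdvd : a - b ∣ aeval a p - aeval b p := by
    simpa only [eval_map_algebraMap] using sub_dvd_eval_sub a b (p.map (algebraMap R S))
  rw [ha, zero_sub, dvd_neg] at hdvd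
  exact isUnit_of_dvd_unit hdvd (isUnit_aeval_of_isCoprime hpq hb)

open scoped IsMulCommutative in
lemma isUnit_sub_of_commute_of_isCoprime [Ring S] [Algebra R S] {a b : S} {p q : R[X]}
    (hab : Commute a b) (hpq : IsCoprime p q) (ha : aeval a p = 0) (hb : aeval b q = 0) :
    IsUnit (a - b) := by
  let T := Algebra.adjoin R {a, b}
  have : IsMulCommutative T := Algebra.isMulCommutative_adjoin R <| by
    rintro x (rfl | rfl) y (rfl | rfl)
    exacts [rfl, hab, hab.symm, rfl]
  let a' : T := ⟨a, Algebra.subset_adjoin (Set.mem_insert a {b})⟩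
  let b' : T := ⟨b, Algebra.subset_adjoin (Set.mem_insert_of_mem a rfl)⟩
  have ha' : aeval a' p = 0 := Subtype.ext <| by rwa [aeval_subalgebra_coe]
  have hb' : aeval b' q = 0 := Subtype.ext <| by rwa [aeval_subalgebra_coe]
  have hunit : IsUnit (a' - b') := isUnit_sub_of_isCoprime hpq ha' hb'
  exact hunit.map T.val

end CoprimeAnnihilators

section Kronecker

variable {R : Type*} [CommRing R] (m n : Type*) [Fintype m] [DecidableEq m] [Fintype n]
  [DecidableEq n]

/-- The embedding `A ↦ 1 ⊗ A` of matrix algebras, used to evaluate polynomials at `1 ⊗ A`. -/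
def oneKroneckerAlgHom : Matrix n n R →ₐ[R] Matrix (m × n) (m × n) R :=
  AlgHom.ofLinearMap (kroneckerBilinear 1) one_kronecker_one fun A B ↦ by
    simp [kroneckerBilinear, ← mul_kronecker_mul]

/-- The embedding `B ↦ B ⊗ 1` of matrix algebras, used to evaluate polynomials at `B ⊗ 1`. -/
def kroneckerOneAlgHom : Matrix m m R →ₐ[R] Matrix (m × n) (m × n) R :=
  AlgHom.ofLinearMap (kroneckerBilinear.flip 1) (one_kronecker_one (α := R)) fun A B ↦ by
    simp [kroneckerBilinear, ← mul_kronecker_mul]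

variable {m n}

lemma commute_one_kronecker_kronecker_one (A : Matrix n n R) (B : Matrix m m R) :
    Commute ((1 : Matrix m m R) ⊗ₖ A) (B ⊗ₖ (1 : Matrix n n R)) := by
  simp only [commute_iff_eq, ← mul_kronecker_mul, one_mul, mul_one]

lemma aeval_one_kronecker_charpoly (A : Matrix n n R) :
    aeval ((1 : Matrix m m R) ⊗ₖ A) A.charpoly = 0 := by
  change aeval (oneKroneckerAlgHom m n A) A.charpoly = 0
  rw [aeval_algHom_apply, aeval_self_charpoly, map_zero]

lemma aeval_kronecker_one_charpoly (B : Matrix m m R) :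
    aeval (B ⊗ₖ (1 : Matrix n n R)) B.charpoly = 0 := by
  change aeval (kroneckerOneAlgHom m n B) B.charpoly = 0
  rw [aeval_algHom_apply, aeval_self_charpoly, map_zero]

theorem isUnit_kronecker_sum_of_isCoprime_charpoly {A : Matrix n n R} {B : Matrix m m R}
    (h : IsCoprime A.charpoly (B.charpoly.comp (-X))) :
    IsUnit ((1 : Matrix m m R) ⊗ₖ A + B ⊗ₖ (1 : Matrix n n R)) := by
  rw [← sub_neg_eq_add]
  refine isUnit_sub_of_commute_of_isCoprime
    (commute_one_kronecker_kronecker_one A B).neg_right h (aeval_one_kronecker_charpoly A) ?_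
  rw [aeval_comp, map_neg, aeval_X, neg_neg, aeval_kronecker_one_charpoly]

end Kronecker

section Hurwitz

variable {K : Type*} [Field K] [Algebra K ℂ]

/-- A Hurwitz polynomial: all its complex roots lie in the open left half-plane. Coefficients are
taken in any field `K` with an embedding into `ℂ`. -/
def IsHurwitz (p : K[X]) : Prop :=
  ∀ z : ℂ, aeval z p = 0 → z.re < 0

lemma isHurwitz_charpoly_iff {n : Type*} [Fintype n] [DecidableEq n] {A : Matrix n n K} :
    IsHurwitz A.charpoly ↔
      ∀ z : ℂ, (A.map (algebraMap K ℂ)).charpoly.IsRoot z → z.re < 0 := by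
  simp only [IsHurwitz, charpoly_map, IsRoot.def, eval_map_algebraMap]

lemma IsHurwitz.isCoprime_comp_neg_X {p q : K[X]} (hp : IsHurwitz p) (hq : IsHurwitz q) :
    IsCoprime p (q.comp (-X)) := by
  rw [isCoprime_iff_aeval_ne_zero_of_isAlgClosed K ℂ]
  intro z
  by_contra! ⟨hpz, hqz⟩
  rw [aeval_comp, map_neg, aeval_X] at hqz
  have hz : z.re < 0 := hp z hpz
  have hneg : (-z).re < 0 := hq (-z) hqz
  rw [Complex.neg_re] at hneg
  linarith

theorem kronecker_sum_invertible_of_hurwitz_general {m n : Type*} [Fintype m] [DecidableEq m]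
    [Fintype n] [DecidableEq n] (A : Matrix n n K) (B : Matrix m m K)
    (hA : ∀ z : ℂ, (A.map (algebraMap K ℂ)).charpoly.IsRoot z → z.re < 0)
    (hB : ∀ z : ℂ, (B.map (algebraMap K ℂ)).charpoly.IsRoot z → z.re < 0) :
    IsUnit ((1 : Matrix m m K) ⊗ₖ A + B ⊗ₖ (1 : Matrix n n K)) :=
  isUnit_kronecker_sum_of_isCoprime_charpoly <|
    (isHurwitz_charpoly_iff.2 hA).isCoprime_comp_neg_X (isHurwitz_charpoly_iff.2 hB)

end Hurwitz

/-- If `A` is Hurwitz (all roots of its characteristic polynomial over `ℂ`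
have strictly negative real part), then the Kronecker sum `I ⊗ A + A ⊗ I` is invertible. -/
theorem kronecker_sum_invertible_of_hurwitz (n : ℕ) (A : Matrix (Fin n) (Fin n) ℝ)
    (hA : ∀ z : ℂ, (A.map (Complex.ofReal)).charpoly.IsRoot z → z.re < 0) :
    IsUnit ((1 : Matrix (Fin n) (Fin n) ℝ) ⊗ₖ A + A ⊗ₖ (1 : Matrix (Fin n) (Fin n) ℝ)) :=
  kronecker_sum_invertible_of_hurwitz_general A A hA hA
end

section
/- Let Γ ∈ ℝ^{n×n} be positive definite symmetric and let E ⊆ [n]×[n] be a set of directed edges. Suppose A₀ ∈ ℝ^{n×n} satisfies ΓA₀ᵀ + A₀Γ = -I and (A₀)_{i,j} = 0 for all (i,j) ∉ E, and suppose that the only skew-symmetric matrix K ∈ ℝ^{n×n} with (KΓ⁻¹)_{i,j} = 0 for all (i,j) ∉ E is K = 0. Then A₀ is the unique matrix A ∈ ℝ^{n×n} satisfying both ΓAᵀ + AΓ = -I and A_{i,j} = 0 for all (i,j) ∉ E; that is, exact knowledge of the edge set E recovers the state matrix exactly from the covariance Lyapunov equation. -/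
open Matrix

/-!
The difference `D` of two solutions satisfies `Γ * Dᵀ + D * Γ = 0`, which for symmetric `Γ` says
that `K = D * Γ` is skew-symmetric. Hence the solutions are the matrices `A₀ + K * Γ⁻¹` with `K`
skew-symmetric, and when both solutions are supported in `E`, so is `K * Γ⁻¹`.
-/

section

variable {ι R : Type*} [Fintype ι] [CommRing R] {Γ : Matrix ι ι R}

theorem transpose_mul_eq_neg_iff_lyapunov_eq_zero (hΓ : Γ.IsSymm) (D : Matrix ι ι R) :
    (D * Γ)ᵀ = -(D * Γ) ↔ Γ * Dᵀ + D * Γ = 0 := by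
  rw [transpose_mul, hΓ.eq, eq_neg_iff_add_eq_zero]

theorem lyapunov_sub (Γ A B : Matrix ι ι R) :
    Γ * (A - B)ᵀ + (A - B) * Γ = (Γ * Aᵀ + A * Γ) - (Γ * Bᵀ + B * Γ) := by
  rw [transpose_sub, Matrix.mul_sub, Matrix.sub_mul, add_sub_add_comm]

variable [DecidableEq ι]

theorem lyapunov_eq_iff_exists_skew {A₀ C : Matrix ι ι R} (hΓ : Γ.IsSymm) (hdet : IsUnit Γ.det)
    (hA₀ : Γ * A₀ᵀ + A₀ * Γ = C) (A : Matrix ι ι R) :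
    Γ * Aᵀ + A * Γ = C ↔ ∃ K : Matrix ι ι R, Kᵀ = -K ∧ A = A₀ + K * Γ⁻¹ := by
  have skew_iff : ((A - A₀) * Γ)ᵀ = -((A - A₀) * Γ) ↔ Γ * Aᵀ + A * Γ = C := by
    rw [transpose_mul_eq_neg_iff_lyapunov_eq_zero hΓ, lyapunov_sub, hA₀, sub_eq_zero]
  constructor
  · intro hA
    refine ⟨(A - A₀) * Γ, skew_iff.mpr hA, ?_⟩
    rw [mul_nonsing_inv_cancel_right _ _ hdet, add_sub_cancel]
  · rintro ⟨K, hK, rfl⟩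
    rw [← skew_iff, add_sub_cancel_left, nonsing_inv_mul_cancel_right _ _ hdet, hK]

theorem unique_solution_with_edge_support_general {E : Set (ι × ι)} {A₀ A C : Matrix ι ι R}
    (hΓ : Γ.IsSymm) (hdet : IsUnit Γ.det)
    (hA₀ : Γ * A₀ᵀ + A₀ * Γ = C) (hA₀E : ∀ p : ι × ι, p ∉ E → A₀ p.1 p.2 = 0)
    (hE : ∀ K : Matrix ι ι R, Kᵀ = -K →
      (∀ p : ι × ι, p ∉ E → (K * Γ⁻¹) p.1 p.2 = 0) → K = 0)
    (hA : Γ * Aᵀ + A * Γ = C) (hAE : ∀ p : ι × ι, p ∉ E → A p.1 p.2 = 0) :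
    A = A₀ := by
  obtain ⟨K, hK, rfl⟩ := (lyapunov_eq_iff_exists_skew hΓ hdet hA₀ A).mp hA
  have hKE : ∀ p : ι × ι, p ∉ E → (K * Γ⁻¹) p.1 p.2 = 0 := fun p hp ↦ by
    simpa only [Matrix.add_apply, hA₀E p hp, zero_add] using hAE p hp
  rw [hE K hK hKE, Matrix.zero_mul, add_zero]

end

/-- Let `Γ` be positive definite symmetric and `E` a set of directed edges.
If `A₀` solves the covariance Lyapunov equation with support in `E`, and the only
skew-symmetric `K` with `(K Γ⁻¹)` supported in `E` is `K = 0`, then `A₀` is the unique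
solution of the Lyapunov equation supported in `E`. -/
theorem unique_solution_with_edge_support (n : ℕ) (Γ : Matrix (Fin n) (Fin n) ℝ)
    (hΓ : Γ.PosDef) (E : Set (Fin n × Fin n)) (A₀ : Matrix (Fin n) (Fin n) ℝ)
    (hA₀ : Γ * A₀ᵀ + A₀ * Γ = -1)
    (hA₀supp : ∀ p : Fin n × Fin n, p ∉ E → A₀ p.1 p.2 = 0)
    (hK : ∀ K : Matrix (Fin n) (Fin n) ℝ, Kᵀ = -K →
      (∀ p : Fin n × Fin n, p ∉ E → (K * Γ⁻¹) p.1 p.2 = 0) → K = 0) :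
    ∀ A : Matrix (Fin n) (Fin n) ℝ, Γ * Aᵀ + A * Γ = -1 →
      (∀ p : Fin n × Fin n, p ∉ E → A p.1 p.2 = 0) → A = A₀ :=
  fun _ hA hAE ↦ unique_solution_with_edge_support_general
    (isHermitian_iff_isSymm.mp hΓ.isHermitian) (Γ.isUnit_iff_isUnit_det.mp hΓ.isUnit)
    hA₀ hA₀supp hK hA hAE
end
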